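/- arXiv:1306.2674 — 3 statements merged into one kernel-verified Lean document; each statement's English description precedes it below -/
import Mathlib

section
/- Let (μ_n)_{n≥1} be a sequence of Borel probability measures on ℝ with finite fourth moments such that ∫ x^i dμ_n → 1/2 as n → ∞ for each i = 1, 2, 3, 4. Then μ_n converges weakly to the measure (1/2)δ_{0} + (1/2)δ_{1}. -/
open MeasureTheory Filter Topology BoundedContinuousFunction

/-- Weak convergence of a sequence of measures: convergence of integrals of all
bounded continuous functions. -/
def WeakConv (μs : ℕ → Measure ℝ) (μ : Measure ℝ) : Prop :=
  ∀ f : ℝ →ᵇ ℝ, Tendsto (fun n => ∫ x, f x ∂(μs n)) atTop (𝓝 (∫ x, f x ∂μ))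

/-- The two-point measure (1/2)δ₀ + (1/2)δ₁. -/
noncomputable def halfZeroHalfOne : Measure ℝ :=
  (1 / 2 : ENNReal) • Measure.dirac (0 : ℝ) + (1 / 2 : ENNReal) • Measure.dirac (1 : ℝ)

/-!
Let `ν` be carried by a finite set `s` of `k` points, and let `P` be the polynomial of degree `< k`
interpolating a test function `f` on `s`. The residual `f - P` vanishes on `s`, so it is at most `ε`
near `s`, while away from `s` it is dominated by a multiple of `q x = ∏ a ∈ s, (x - a) ^ 2`:
altogether `|f - P| ≤ ε + K * q`. As `q` has degree `2k` and `∫ q ∂ν = 0`, convergence of the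
moments up to order `2k` gives `∫ q ∂μₙ → 0`, hence `∫ (f - P) ∂μₙ → 0`, and also
`∫ P ∂μₙ → ∫ P ∂ν = ∫ f ∂ν`. Here `s = {0, 1}`.
-/

open Asymptotics Polynomial

section Domination

variable {X E : Type*} [NormedAddCommGroup E] {g : X → E} {q : X → ℝ}

theorem exists_norm_le_add_mul_of_isBigO_cocompact [TopologicalSpace X] (hg : Continuous g)
    (hq : Continuous q) (hq_nonneg : ∀ x, 0 ≤ q x) (hzero : ∀ x, q x = 0 → g x = 0)
    (hgq : g =O[cocompact X] q) {ε : ℝ} (hε : 0 < ε) :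
    ∃ K, ∀ x, ‖g x‖ ≤ ε + K * q x := by
  obtain ⟨C, hC_nonneg, hC⟩ := hgq.exists_nonneg
  obtain ⟨t, ht, htC⟩ := mem_cocompact.1 hC.bound
  have hcompact : IsCompact (t ∩ {x | ε ≤ ‖g x‖}) :=
    ht.inter_right (isClosed_le continuous_const hg.norm)
  have hne : ∀ x ∈ t ∩ {x | ε ≤ ‖g x‖}, q x ≠ 0 := by
    rintro x ⟨-, hx⟩ hqx
    have hε_le : ε ≤ ‖g x‖ := hx
    rw [hzero x hqx, norm_zero] at hε_le
    exact hε_le.not_gt hε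
  obtain ⟨D, hD⟩ := hcompact.exists_bound_of_continuousOn
    (f := fun x => ‖g x‖ / q x) (hg.norm.continuousOn.div hq.continuousOn hne)
  refine ⟨max C D, fun x => ?_⟩
  have hC_le : C * q x ≤ max C D * q x :=
    mul_le_mul_of_nonneg_right (le_max_left C D) (hq_nonneg x)
  have hD_le : D * q x ≤ max C D * q x :=
    mul_le_mul_of_nonneg_right (le_max_right C D) (hq_nonneg x)
  by_cases hxt : x ∈ t
  · rcases le_total ε ‖g x‖ with hlarge | hsmall
    · have hquot : ‖g x‖ / q x ≤ D := (le_abs_self _).trans (hD x ⟨hxt, hlarge⟩)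
      have hpos : 0 < q x := (hq_nonneg x).lt_of_ne' (hne x ⟨hxt, hlarge⟩)
      linarith [(div_le_iff₀ hpos).1 hquot]
    · linarith [mul_nonneg hC_nonneg (hq_nonneg x)]
  · have hx : ‖g x‖ ≤ C * ‖q x‖ := htC hxt
    rw [Real.norm_of_nonneg (hq_nonneg x)] at hx
    linarith

variable [MeasurableSpace X] [NormedSpace ℝ E]

theorem norm_integral_le_mul_measureReal_add_mul_integral {μ : Measure X} [IsFiniteMeasure μ]
    (hq : Integrable q μ) {ε K : ℝ} (hgq : ∀ x, ‖g x‖ ≤ ε + K * q x) :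
    ‖∫ x, g x ∂μ‖ ≤ ε * μ.real Set.univ + K * ∫ x, q x ∂μ :=
  calc ‖∫ x, g x ∂μ‖ ≤ ∫ x, ε + K * q x ∂μ :=
        norm_integral_le_of_norm_le ((integrable_const ε).add (hq.const_mul K)) (ae_of_all μ hgq)
    _ = ε * μ.real Set.univ + K * ∫ x, q x ∂μ := by
        rw [integral_add (integrable_const ε) (hq.const_mul K), integral_const, integral_const_mul,
          smul_eq_mul, mul_comm ε]

theorem tendsto_integral_zero_of_forall_norm_le_add_mul {ι : Type*} {l : Filter ι}
    {μ : ι → Measure X} [∀ n, IsFiniteMeasure (μ n)]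
    (hmass : IsBoundedUnder (· ≤ ·) l fun n => (μ n).real Set.univ)
    (hq : ∀ n, Integrable q (μ n)) (hq_lim : Tendsto (fun n => ∫ x, q x ∂μ n) l (𝓝 0))
    (hgq : ∀ ε > 0, ∃ K, ∀ x, ‖g x‖ ≤ ε + K * q x) :
    Tendsto (fun n => ∫ x, g x ∂μ n) l (𝓝 0) := by
  obtain ⟨M, hM⟩ := hmass.eventually_le
  rw [Metric.tendsto_nhds]
  intro ε hε
  obtain ⟨δ, hδ, hδM⟩ : ∃ δ > 0, M * δ < ε := exists_pos_mul_lt hε M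
  obtain ⟨K, hK⟩ := hgq δ hδ
  have hK_lim : Tendsto (fun n => M * δ + K * ∫ x, q x ∂μ n) l (𝓝 (M * δ)) := by
    simpa using (hq_lim.const_mul K).const_add (M * δ)
  filter_upwards [hM, hK_lim.eventually_lt_const hδM] with n hMn hn
  rw [dist_zero_right]
  calc ‖∫ x, g x ∂μ n‖ ≤ δ * (μ n).real Set.univ + K * ∫ x, q x ∂μ n :=
        norm_integral_le_mul_measureReal_add_mul_integral (hq n) hK
    _ ≤ M * δ + K * ∫ x, q x ∂μ n := by rw [mul_comm M]; gcongr
    _ < ε := hn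

end Domination

theorem eval_isBigO_cocompact_pow {P : ℝ[X]} {d : ℕ} (hP : P.natDegree ≤ d) :
    (fun x => P.eval x) =O[cocompact ℝ] fun x => x ^ d := by
  rw [← Metric.cobounded_eq_cocompact]
  simpa using isBigO_cobounded_of_degree_le (P := P) (Q := X ^ d)
    (by simpa using degree_le_of_natDegree_le hP)

theorem boundedContinuousFunction_isBigO_cocompact_pow {E : Type*} [NormedAddCommGroup E]
    (f : ℝ →ᵇ E) (d : ℕ) :
    (fun x => f x) =O[cocompact ℝ] fun x => x ^ d := by
  have hbdd : (fun x => f x) =O[cocompact ℝ] fun _ => (1 : ℝ) :=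
    .of_bound ‖f‖ (.of_forall fun x => by simpa using f.norm_coe_le_norm x)
  refine hbdd.trans ?_
  simpa using eval_isBigO_cocompact_pow (P := 1) (d := d) (by simp)

theorem integrable_eval_of_natDegree_le {μ : Measure ℝ} [IsLocallyFiniteMeasure μ]
    {P : ℝ[X]} {d : ℕ} (hμ : Integrable (fun x => x ^ d) μ) (hP : P.natDegree ≤ d) :
    Integrable (fun x => P.eval x) μ :=
  P.continuous.locallyIntegrable.integrable_of_isBigO_cocompact (eval_isBigO_cocompact_pow hP)
    (hμ.integrableAtFilter _)

theorem integrable_pow_of_le {μ : Measure ℝ} [IsLocallyFiniteMeasure μ] {i d : ℕ}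
    (hμ : Integrable (fun x => x ^ d) μ) (hi : i ≤ d) : Integrable (fun x => x ^ i) μ := by
  simpa using integrable_eval_of_natDegree_le (P := X ^ i) hμ (by simpa using hi)

theorem integral_eval_eq_sum_coeff_mul_moment {μ : Measure ℝ} [IsLocallyFiniteMeasure μ]
    {P : ℝ[X]} (hμ : Integrable (fun x => x ^ P.natDegree) μ) :
    ∫ x, P.eval x ∂μ = ∑ i ∈ Finset.range (P.natDegree + 1), P.coeff i * ∫ x, x ^ i ∂μ := by
  simp_rw [eval_eq_sum_range, ← integral_const_mul]
  exact integral_finsetSum _ fun i hi =>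
    (integrable_pow_of_le hμ (Finset.mem_range_succ_iff.1 hi)).const_mul _

theorem integrable_of_continuous_of_ae_mem_isCompact {X E : Type*} [TopologicalSpace X] [T2Space X]
    [MeasurableSpace X] [OpensMeasurableSpace X] [NormedAddCommGroup E]
    [SecondCountableTopologyEither X E] {ν : Measure X} [IsFiniteMeasureOnCompacts ν] {K : Set X}
    (hK : IsCompact K) (hν : ∀ᵐ x ∂ν, x ∈ K) {f : X → E} (hf : Continuous f) :
    Integrable f ν := by
  rw [← Measure.restrict_eq_self_of_ae_mem hν]
  exact hf.continuousOn.integrableOn_compact hK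

section Nodal

open Lagrange

variable {s : Finset ℝ}

theorem eval_nodal_sq_eq_zero_iff {x : ℝ} : (nodal s id ^ 2).eval x = 0 ↔ x ∈ s := by
  simp [eval_nodal, Finset.prod_eq_zero_iff, sub_eq_zero]

theorem natDegree_nodal_sq : (nodal s (id : ℝ → ℝ) ^ 2).natDegree = 2 * s.card := by
  rw [natDegree_pow, natDegree_nodal]

theorem pow_isBigO_cocompact_eval_nodal_sq :
    (fun x => x ^ (2 * s.card)) =O[cocompact ℝ] fun x => (nodal s id ^ 2).eval x := by
  rw [← Metric.cobounded_eq_cocompact]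
  have hdeg : (X ^ (2 * s.card) : ℝ[X]).degree ≤ (nodal s (id : ℝ → ℝ) ^ 2).degree := by
    simp [degree_pow, degree_nodal]
  exact (isBigO_cobounded_of_degree_le hdeg).congr_left fun x => by rw [eval_pow, eval_X]

theorem exists_norm_le_add_mul_eval_nodal_sq {E : Type*} [NormedAddCommGroup E] {g : ℝ → E}
    (hg : Continuous g) (hgs : ∀ a ∈ s, g a = 0)
    (hgrowth : g =O[cocompact ℝ] fun x => x ^ (2 * s.card)) {ε : ℝ} (hε : 0 < ε) :
    ∃ K, ∀ x, ‖g x‖ ≤ ε + K * (nodal s id ^ 2).eval x :=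
  exists_norm_le_add_mul_of_isBigO_cocompact hg (Polynomial.continuous _)
    (fun x => by rw [eval_pow]; positivity)
    (fun x hx => hgs x (eval_nodal_sq_eq_zero_iff.1 hx))
    (hgrowth.trans pow_isBigO_cocompact_eval_nodal_sq) hε

end Nodal

section Moments

variable {ι : Type*} {l : Filter ι} {μ : ι → Measure ℝ} {ν : Measure ℝ}

theorem tendsto_integral_eval_of_tendsto_moments [∀ n, IsLocallyFiniteMeasure (μ n)]
    [IsLocallyFiniteMeasure ν] {d : ℕ}
    (hμ : ∀ n, Integrable (fun x => x ^ d) (μ n)) (hν : Integrable (fun x => x ^ d) ν)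
    (hmom : ∀ i ≤ d, Tendsto (fun n => ∫ x, x ^ i ∂μ n) l (𝓝 (∫ x, x ^ i ∂ν)))
    {P : ℝ[X]} (hP : P.natDegree ≤ d) :
    Tendsto (fun n => ∫ x, P.eval x ∂μ n) l (𝓝 (∫ x, P.eval x ∂ν)) := by
  rw [integral_eval_eq_sum_coeff_mul_moment (integrable_pow_of_le hν hP)]
  simp_rw [fun n => integral_eval_eq_sum_coeff_mul_moment (integrable_pow_of_le (hμ n) hP)]
  exact tendsto_finsetSum _ fun i hi =>
    (hmom i ((Finset.mem_range_succ_iff.1 hi).trans hP)).const_mul _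

variable [∀ n, IsFiniteMeasure (μ n)] [IsFiniteMeasure ν] {s : Finset ℝ}

theorem tendsto_integral_zero_of_eq_zero_on_of_tendsto_moments (hs : ∀ᵐ x ∂ν, x ∈ s)
    (hμ : ∀ n, Integrable (fun x => x ^ (2 * s.card)) (μ n))
    (hmom : ∀ i ≤ 2 * s.card, Tendsto (fun n => ∫ x, x ^ i ∂μ n) l (𝓝 (∫ x, x ^ i ∂ν)))
    {E : Type*} [NormedAddCommGroup E] [NormedSpace ℝ E] {g : ℝ → E} (hg : Continuous g)
    (hgs : ∀ a ∈ s, g a = 0) (hgrowth : g =O[cocompact ℝ] fun x => x ^ (2 * s.card)) :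
    Tendsto (fun n => ∫ x, g x ∂μ n) l (𝓝 0) := by
  have hν : Integrable (fun x => x ^ (2 * s.card)) ν :=
    integrable_of_continuous_of_ae_mem_isCompact s.finite_toSet.isCompact hs (by fun_prop)
  have hmass : Tendsto (fun n => (μ n).real Set.univ) l (𝓝 (ν.real Set.univ)) := by
    simpa using hmom 0 (Nat.zero_le _)
  have hnodal : ∫ x, (Lagrange.nodal s id ^ 2).eval x ∂ν = 0 :=
    integral_eq_zero_of_ae (hs.mono fun x hx => eval_nodal_sq_eq_zero_iff.2 hx)
  have hnodal_lim : Tendsto (fun n => ∫ x, (Lagrange.nodal s id ^ 2).eval x ∂μ n) l (𝓝 0) :=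
    hnodal ▸ tendsto_integral_eval_of_tendsto_moments hμ hν hmom natDegree_nodal_sq.le
  exact tendsto_integral_zero_of_forall_norm_le_add_mul hmass.isBoundedUnder_le
    (fun n => integrable_eval_of_natDegree_le (hμ n) natDegree_nodal_sq.le) hnodal_lim
    fun ε hε => exists_norm_le_add_mul_eval_nodal_sq hg hgs hgrowth hε

theorem moments_to_half_implies_zero_one_bernoulli_general
    (hs : ∀ᵐ x ∂ν, x ∈ s) (hμ : ∀ n, Integrable (fun x => x ^ (2 * s.card)) (μ n))
    (hmom : ∀ i ≤ 2 * s.card, Tendsto (fun n => ∫ x, x ^ i ∂μ n) l (𝓝 (∫ x, x ^ i ∂ν)))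
    {f : ℝ → ℝ} (hf : Continuous f) (hgrowth : f =O[cocompact ℝ] fun x => x ^ (2 * s.card)) :
    Tendsto (fun n => ∫ x, f x ∂μ n) l (𝓝 (∫ x, f x ∂ν)) := by
  set P : ℝ[X] := Lagrange.interpolate s id f
  have hP_deg : P.natDegree ≤ 2 * s.card :=
    natDegree_le_of_degree_le <| (Lagrange.degree_interpolate_lt f (Set.injOn_id _)).le.trans <| by
      norm_cast; lia
  have hP_node : ∀ a ∈ s, P.eval a = f a := fun a ha =>
    Lagrange.eval_interpolate_at_node f (Set.injOn_id _) ha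
  have hν : Integrable (fun x => x ^ (2 * s.card)) ν :=
    integrable_of_continuous_of_ae_mem_isCompact s.finite_toSet.isCompact hs (by fun_prop)
  have hresidual : Tendsto (fun n => ∫ x, f x - P.eval x ∂μ n) l (𝓝 0) :=
    tendsto_integral_zero_of_eq_zero_on_of_tendsto_moments hs hμ hmom (hf.sub P.continuous)
      (fun a ha => by rw [hP_node a ha, sub_self])
      (hgrowth.sub (eval_isBigO_cocompact_pow hP_deg))
  have hinterp : Tendsto (fun n => ∫ x, P.eval x ∂μ n) l (𝓝 (∫ x, f x ∂ν)) := by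
    rw [← integral_congr_ae (hs.mono hP_node)]
    exact tendsto_integral_eval_of_tendsto_moments hμ hν hmom hP_deg
  rw [← zero_add (∫ x, f x ∂ν)]
  refine (hresidual.add hinterp).congr fun n => ?_
  have hf_int : Integrable f (μ n) :=
    hf.locallyIntegrable.integrable_of_isBigO_cocompact hgrowth ((hμ n).integrableAtFilter _)
  rw [integral_sub hf_int (integrable_eval_of_natDegree_le (hμ n) hP_deg), sub_add_cancel]

end Moments

theorem integral_halfZeroHalfOne (f : ℝ → ℝ) : ∫ x, f x ∂halfZeroHalfOne = (f 0 + f 1) / 2 := by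
  have hint (a : ℝ) : Integrable f ((1 / 2 : ENNReal) • Measure.dirac a) :=
    (integrable_dirac (by simp)).smul_measure (by simp)
  rw [halfZeroHalfOne, integral_add_measure (hint 0) (hint 1), integral_smul_measure,
    integral_smul_measure, integral_dirac, integral_dirac]
  simp only [one_div, ENNReal.toReal_inv, ENNReal.toReal_ofNat, smul_eq_mul]
  ring

instance isProbabilityMeasure_halfZeroHalfOne : IsProbabilityMeasure halfZeroHalfOne :=
  ⟨by simp [halfZeroHalfOne, ENNReal.inv_two_add_inv_two]⟩

theorem ae_halfZeroHalfOne_mem : ∀ᵐ x ∂halfZeroHalfOne, x ∈ ({0, 1} : Finset ℝ) := by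
  rw [halfZeroHalfOne, ae_add_measure_iff]
  constructor <;> exact Measure.ae_smul_measure (by simp [ae_dirac_eq]) _

theorem moments_to_half_implies_zero_one_bernoulli
    (μ : ℕ → Measure ℝ)
    (hprob : ∀ n, IsProbabilityMeasure (μ n))
    (hmom4 : ∀ n, Integrable (fun x => x ^ 4) (μ n))
    (hmom : ∀ i : ℕ, 1 ≤ i → i ≤ 4 →
      Tendsto (fun n => ∫ x, x ^ i ∂(μ n)) atTop (𝓝 (1 / 2))) :
    WeakConv μ halfZeroHalfOne := by
  have hcard : 2 * ({0, 1} : Finset ℝ).card = 4 := by simp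
  intro f
  refine moments_to_half_implies_zero_one_bernoulli_general ae_halfZeroHalfOne_mem
    (by simpa only [hcard] using hmom4) (fun i hi => ?_) f.continuous
    (boundedContinuousFunction_isBigO_cocompact_pow f _)
  rw [integral_halfZeroHalfOne]
  rcases i.eq_zero_or_pos with rfl | hi_pos
  · simp
  · simpa [hi_pos.ne'] using hmom i hi_pos (hcard ▸ hi)
end

section
/- Let (μ_n)_{n≥1} be a sequence of Borel probability measures on ℝ, each infinitely divisible with respect to classical convolution and each having finite fourth moment. Write m_i(n) = ∫ x^i dμ_n, and define the first four classical cumulants of μ_n by κ₁(n) = m₁(n), κ₂(n) = m₂(n) − m₁(n)², κ₃(n) = m₃(n) − 3 m₁(n) m₂(n) + 2 m₁(n)³, κ₄(n) = m₄(n) − 4 m₁(n) m₃(n) − 3 m₂(n)² + 12 m₁(n)² m₂(n) − 6 m₁(n)⁴. If κ_i(n) → 1 as n → ∞ for i = 1, 2, 3, 4, then μ_n converges weakly to the Poisson distribution with parameter 1, i.e., the measure Σ_{j=0}^∞ (e^{−1}/j!) δ_j on ℝ. -/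
open MeasureTheory Filter Topology BoundedContinuousFunction

/-- Classical convolution of two Borel measures on ℝ: the pushforward of the
product measure under addition. -/
noncomputable def classicalConv (μ ν : Measure ℝ) : Measure ℝ :=
  (μ.prod ν).map (fun p => p.1 + p.2)

/-- The m-fold classical convolution power of a measure (0th power is δ₀). -/
noncomputable def convPow (ν : Measure ℝ) : ℕ → Measure ℝ
  | 0 => Measure.dirac 0
  | n + 1 => classicalConv (convPow ν n) ν

/-- A probability measure is classically infinitely divisible if for every m ≥ 1 it
is the m-fold classical convolution power of some probability measure. -/
def IsClassicallyInfDiv (μ : Measure ℝ) : Prop :=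
  ∀ m : ℕ, 1 ≤ m → ∃ ν : Measure ℝ, IsProbabilityMeasure ν ∧ μ = convPow ν m

/-- The Poisson distribution with parameter 1, as a Borel measure on ℝ:
∑_{j=0}^∞ (e^{-1}/j!) δ_j. -/
noncomputable def poissonOne : Measure ℝ :=
  Measure.sum (fun j : ℕ =>
    ENNReal.ofReal (Real.exp (-1) / (Nat.factorial j)) • Measure.dirac (j : ℝ))

/-!
Let `κₖ(μₙ) → r` for `k = 1, …, 4`, and let `μₙ` be the `n`-fold convolution power of `νₙ`.
Cumulants are additive under convolution, so `n κₖ(νₙ) → r`; hence products of two or more cumulants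
of `νₙ` are `o(1 / n)`, and the moments satisfy `n mₖ(νₙ) → r` as well.

The measures `ρₙ = n x² νₙ(dx)` then have total mass `n m₂(νₙ) → r`, and
`∫ (x - 1)² dρₙ = n (m₄ - 2 m₃ + m₂)(νₙ) → 0`, so that they concentrate at `1`. Since
`n (φ_{νₙ}(t) - 1) = i t n m₁(νₙ) + ∫ (e^{itx} - 1 - itx) / x² dρₙ`, this quantity tends to
`i t r + r (e^{it} - 1 - it) = r (e^{it} - 1)`. Therefore `φ_{μₙ}(t) = φ_{νₙ}(t)ⁿ` tends to
`exp (r (e^{it} - 1))`, and Lévy's continuity theorem concludes.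
-/

section FormalCumulants

open PowerSeries Finset
open scoped Nat

variable {R : Type*} [CommRing R]

/-- The binomial convolution of two sequences: the operation on moment sequences that corresponds to
adding independent random variables. -/
def binomialConv (a b : ℕ → R) (n : ℕ) : R :=
  ∑ ij ∈ antidiagonal n, n.choose ij.1 * (a ij.1 * b ij.2)

/-- The formal cumulants `κ` of a sequence `m` of moments, given by solving
`m (n + 1) = ∑ k ≤ n, n.choose k * κ (k + 1) * m (n - k)` for the term `κ (n + 1)` under the
convention `m 0 = 1`. The sum runs over `Fin n` so that the recursion is well-founded. -/
def cumulantSeq (m : ℕ → R) : ℕ → R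
  | 0 => 0
  | n + 1 => m (n + 1) - ∑ k : Fin n, n.choose k * (cumulantSeq m (k + 1) * m (n - k))

lemma cumulantSeq_succ (m : ℕ → R) (n : ℕ) :
    cumulantSeq m (n + 1) = m (n + 1) -
      ∑ k ∈ range n, n.choose k * (cumulantSeq m (k + 1) * m (n - k)) := by
  rw [cumulantSeq, Finset.sum_range]

lemma cumulantSeq_congr {a b : ℕ → R} {n : ℕ} (h : ∀ k ≤ n, a k = b k) :
    cumulantSeq a n = cumulantSeq b n := by
  induction n using Nat.strong_induction_on with
  | _ n ih =>
    cases n with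
    | zero => simp only [cumulantSeq]
    | succ n =>
      rw [cumulantSeq_succ, cumulantSeq_succ, h _ le_rfl]
      congr 1
      refine Finset.sum_congr rfl fun k hk => ?_
      have hk : k < n := mem_range.1 hk
      rw [ih (k + 1) (by omega) fun j hj => h j (by omega), h (n - k) (by omega)]

lemma binomialConv_cumulantSeq_succ {m : ℕ → R} (hm : m 0 = 1) :
    binomialConv (fun k => cumulantSeq m (k + 1)) m = fun n => m (n + 1) := by
  ext n
  rw [binomialConv, Nat.sum_antidiagonal_eq_sum_range_succ
    (fun i j => (n.choose i : R) * (cumulantSeq m (i + 1) * m j)), sum_range_succ,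
    Nat.choose_self, Nat.sub_self, hm, cumulantSeq_succ]
  ring

variable {K : Type*} [Field K]

/-- The exponential generating function `∑ aₙ Xⁿ / n!` of a sequence, which turns binomial
convolution into multiplication and the shift into differentiation. The division is only sensible in
characteristic zero. -/
def expGenFun (a : ℕ → K) : K⟦X⟧ :=
  .mk fun n => a n / n !

variable [CharZero K]

lemma expGenFun_injective : Function.Injective (expGenFun (K := K)) := by
  intro a b h
  ext n
  have hn : (n ! : K) ≠ 0 := mod_cast n.factorial_ne_zero
  simpa [expGenFun, hn] using congrArg (coeff n) h

lemma derivative_expGenFun (a : ℕ → K) :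
    d⁄dX K (expGenFun a) = expGenFun fun n => a (n + 1) := by
  ext n
  have hn : (n ! : K) ≠ 0 := mod_cast n.factorial_ne_zero
  have hn' : (n + 1 : K) ≠ 0 := mod_cast n.succ_ne_zero
  rw [coeff_derivative, expGenFun, expGenFun, coeff_mk, coeff_mk, Nat.factorial_succ]
  push_cast
  field_simp

lemma expGenFun_binomialConv (a b : ℕ → K) :
    expGenFun (binomialConv a b) = expGenFun a * expGenFun b := by
  ext n
  rw [coeff_mul, expGenFun, expGenFun, expGenFun, coeff_mk, binomialConv, sum_div]
  refine Finset.sum_congr rfl fun ij hij => ?_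
  obtain rfl : ij.1 + ij.2 = n := mem_antidiagonal.1 hij
  have hi : (ij.1 ! : K) ≠ 0 := mod_cast ij.1.factorial_ne_zero
  have hj : (ij.2 ! : K) ≠ 0 := mod_cast ij.2.factorial_ne_zero
  have hij : ((ij.1 + ij.2) ! : K) ≠ 0 := mod_cast (ij.1 + ij.2).factorial_ne_zero
  rw [coeff_mk, coeff_mk, Nat.cast_add_choose]
  field_simp

lemma derivative_expGenFun_moments {m : ℕ → K} (hm : m 0 = 1) :
    d⁄dX K (expGenFun m) = d⁄dX K (expGenFun (cumulantSeq m)) * expGenFun m := by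
  rw [derivative_expGenFun, derivative_expGenFun, ← expGenFun_binomialConv,
    binomialConv_cumulantSeq_succ hm]

-- The derivative of the generating function of the cumulants is the logarithmic derivative of that
-- of the moments, and logarithmic derivatives turn products into sums.
lemma cumulantSeq_binomialConv {a b : ℕ → K} (ha : a 0 = 1) (hb : b 0 = 1) :
    cumulantSeq (binomialConv a b) = cumulantSeq a + cumulantSeq b := by
  have hab : binomialConv a b 0 = 1 := by simp [binomialConv, ha, hb]
  have hne : expGenFun (binomialConv a b) ≠ 0 := fun h => by
    simpa [expGenFun, hab] using congrArg (coeff 0) h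
  have hderiv : d⁄dX K (expGenFun (cumulantSeq (binomialConv a b))) =
      d⁄dX K (expGenFun (cumulantSeq a)) + d⁄dX K (expGenFun (cumulantSeq b)) := by
    refine mul_right_cancel₀ hne ?_
    rw [← derivative_expGenFun_moments hab, expGenFun_binomialConv, Derivation.leibniz,
      derivative_expGenFun_moments ha, derivative_expGenFun_moments hb, smul_eq_mul, smul_eq_mul]
    ring
  have hadd : expGenFun (cumulantSeq a) + expGenFun (cumulantSeq b) =
      expGenFun (cumulantSeq a + cumulantSeq b) := by
    ext n
    simp [expGenFun, add_div]
  rw [← map_add, hadd] at hderiv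
  exact expGenFun_injective <| derivative.ext hderiv <| by simp [expGenFun, cumulantSeq]

end FormalCumulants

section Asymptotics

variable {ι : Type*} {l : Filter ι} {s : ι → ℝ}

lemma tendsto_zero_of_tendsto_mul_of_tendsto_atTop {u : ι → ℝ} {c : ℝ}
    (hs : Tendsto s l atTop) (hu : Tendsto (fun i => s i * u i) l (𝓝 c)) :
    Tendsto u l (𝓝 0) := by
  refine (hu.div_atTop hs).congr' ?_
  filter_upwards [hs.eventually_gt_atTop 0] with i hi
  exact mul_div_cancel_left₀ _ hi.ne'

lemma tendsto_mul_of_tendsto_mul_cumulantSeq {m : ι → ℕ → ℝ} {c : ℕ → ℝ} {k : ℕ}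
    (hs : Tendsto s l atTop)
    (hκ : ∀ j ∈ Finset.Icc 1 k, Tendsto (fun i => s i * cumulantSeq (m i) j) l (𝓝 (c j))) :
    ∀ j ∈ Finset.Icc 1 k, Tendsto (fun i => s i * m i j) l (𝓝 (c j)) := by
  intro j hj
  induction j using Nat.strong_induction_on with
  | _ j ih =>
    obtain ⟨j, rfl⟩ := Nat.exists_eq_succ_of_ne_zero (n := j) (by grind)
    have hterm : ∀ q ∈ Finset.range j, Tendsto
        (fun i => j.choose q * ((s i * cumulantSeq (m i) (q + 1)) * m i (j - q))) l (𝓝 0) := by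
      intro q hq
      have hm : Tendsto (fun i => m i (j - q)) l (𝓝 0) :=
        tendsto_zero_of_tendsto_mul_of_tendsto_atTop hs (ih (j - q) (by grind) (by grind))
      simpa using ((hκ (q + 1) (by grind)).mul hm).const_mul (j.choose q : ℝ)
    have hsum := (hκ (j + 1) hj).add (tendsto_finsetSum _ hterm)
    rw [Finset.sum_const_zero, add_zero] at hsum
    refine hsum.congr fun i => ?_
    rw [cumulantSeq_succ, mul_sub, Finset.mul_sum, sub_add, ← Finset.sum_sub_distrib]
    simp only [Nat.succ_eq_add_one, sub_eq_self]
    exact Finset.sum_eq_zero fun q _ => by ring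

end Asymptotics

section Moments

variable {μ ν : Measure ℝ}

lemma memLp_id_iff_integrable_pow {p : ℕ} (hp : p ≠ 0) :
    MemLp id p μ ↔ Integrable (fun x => x ^ p) μ := by
  rw [← integrable_norm_rpow_iff aestronglyMeasurable_id (mod_cast hp) (by simp),
    ← integrable_norm_iff (f := fun x : ℝ => x ^ p) (by fun_prop)]
  simp

lemma integrable_pow_of_memLp_id [IsFiniteMeasure μ] {p k : ℕ} (h : MemLp id p μ) (hk : k ≤ p) :
    Integrable (fun x => x ^ k) μ := by
  rw [← integrable_norm_iff (by fun_prop)]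
  simpa using (h.mono_exponent (p := k) (mod_cast hk)).integrable_norm_pow'

lemma memLp_id_dirac (a : ℝ) (p : ENNReal) : MemLp id p (Measure.dirac a) :=
  (memLp_congr_ae (ae_eq_dirac id)).2 (memLp_const a)

lemma memLp_id_conv [IsFiniteMeasure μ] [IsFiniteMeasure ν] {p : ENNReal}
    (hμ : MemLp id p μ) (hν : MemLp id p ν) : MemLp id p (μ ∗ ν) :=
  (memLp_map_measure_iff aestronglyMeasurable_id (by fun_prop)).2
    ((hμ.comp_fst ν).add (hν.comp_snd μ))

-- By Fubini some translate of the identity is in `Lᵖ(ν)`.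
lemma memLp_id_right_of_conv [NeZero μ] [IsFiniteMeasure ν] {p : ℕ} (hp : p ≠ 0)
    (h : MemLp id p (μ ∗ ν)) : MemLp id p ν := by
  have hintegrable : Integrable (fun x : ℝ => x ^ p) (μ ∗ ν) := (memLp_id_iff_integrable_pow hp).1 h
  obtain ⟨x, hx⟩ := ((integrable_conv_iff (by fun_prop)).1 hintegrable).1.exists
  have htranslate : MemLp (fun y => x + y) p ν := by
    rw [← integrable_norm_rpow_iff (by fun_prop) (mod_cast hp) (by simp)]
    simpa using hx.norm
  convert! htranslate.sub (memLp_const x) using 1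
  ext y
  simp

lemma integral_pow_conv [IsFiniteMeasure μ] [IsFiniteMeasure ν] {k : ℕ}
    (hμ : MemLp id k μ) (hν : MemLp id k ν) :
    ∫ x, x ^ k ∂(μ ∗ ν) = binomialConv (fun i => ∫ x, x ^ i ∂μ) (fun j => ∫ x, x ^ j ∂ν) k := by
  rw [Measure.conv, integral_map (by fun_prop) (by fun_prop), binomialConv]
  simp_rw [fun z : ℝ × ℝ => (Commute.all z.1 z.2).add_pow' k, nsmul_eq_mul]
  rw [integral_finsetSum]
  · simp_rw [integral_const_mul, ← integral_prod_mul]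
  · intro ij hij
    obtain rfl : ij.1 + ij.2 = k := Finset.HasAntidiagonal.mem_antidiagonal.1 hij
    exact ((integrable_pow_of_memLp_id hμ (by omega)).mul_prod
      (integrable_pow_of_memLp_id hν (by omega))).const_mul _

end Moments

section Cumulants

variable {μ ν : Measure ℝ}

/-- The `k`-th cumulant of a measure on `ℝ`, computed from its moments; meaningful for a probability
measure with a finite `k`-th moment. -/
noncomputable def cumulant (μ : Measure ℝ) (k : ℕ) : ℝ :=
  cumulantSeq (fun i => ∫ x, x ^ i ∂μ) k

lemma cumulant_succ (μ : Measure ℝ) (n : ℕ) :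
    cumulant μ (n + 1) = ∫ x, x ^ (n + 1) ∂μ -
      ∑ k ∈ Finset.range n, n.choose k * (cumulant μ (k + 1) * ∫ x, x ^ (n - k) ∂μ) :=
  cumulantSeq_succ _ n

lemma cumulant_one (μ : Measure ℝ) : cumulant μ 1 = ∫ x, x ∂μ := by
  simpa using cumulant_succ μ 0

lemma cumulant_two (μ : Measure ℝ) :
    cumulant μ 2 = (∫ x, x ^ 2 ∂μ) - (∫ x, x ∂μ) ^ 2 := by
  rw [cumulant_succ μ 1]
  simp [cumulant_one, sq]

lemma cumulant_three (μ : Measure ℝ) :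
    cumulant μ 3 = (∫ x, x ^ 3 ∂μ) - 3 * (∫ x, x ∂μ) * (∫ x, x ^ 2 ∂μ) + 2 * (∫ x, x ∂μ) ^ 3 := by
  rw [cumulant_succ μ 2]
  simp only [Nat.reduceAdd, Finset.sum_range_succ, Finset.range_one, Finset.sum_singleton,
    Nat.choose_zero_right, Nat.cast_one, zero_add, cumulant_one, tsub_zero, one_mul,
    Nat.choose_succ_self_right, Nat.cast_ofNat, cumulant_two, Nat.add_one_sub_one, pow_one]
  ring

lemma cumulant_four (μ : Measure ℝ) :
    cumulant μ 4 = (∫ x, x ^ 4 ∂μ) - 4 * (∫ x, x ∂μ) * (∫ x, x ^ 3 ∂μ)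
      - 3 * (∫ x, x ^ 2 ∂μ) ^ 2 + 12 * (∫ x, x ∂μ) ^ 2 * (∫ x, x ^ 2 ∂μ)
      - 6 * (∫ x, x ∂μ) ^ 4 := by
  rw [cumulant_succ μ 3]
  simp only [Nat.reduceAdd, Finset.sum_range_succ, Finset.range_one, Finset.sum_singleton,
    Nat.choose_zero_right, Nat.cast_one, zero_add, cumulant_one, tsub_zero, one_mul,
    Nat.choose_one_right, Nat.cast_ofNat, cumulant_two, Nat.add_one_sub_one,
    Nat.choose_succ_self_right, cumulant_three, Nat.reduceSub, pow_one]
  ring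

lemma cumulant_conv [IsProbabilityMeasure μ] [IsProbabilityMeasure ν] {k : ℕ}
    (hμ : MemLp id k μ) (hν : MemLp id k ν) :
    cumulant (μ ∗ ν) k = cumulant μ k + cumulant ν k := by
  have hmoment : ∀ j ≤ k, ∫ x, x ^ j ∂(μ ∗ ν) =
      binomialConv (fun i => ∫ x, x ^ i ∂μ) (fun i => ∫ x, x ^ i ∂ν) j := fun j hj =>
    integral_pow_conv (hμ.mono_exponent (mod_cast hj)) (hν.mono_exponent (mod_cast hj))
  rw [cumulant, cumulantSeq_congr hmoment, cumulantSeq_binomialConv (by simp) (by simp)]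
  rfl

lemma cumulant_dirac_zero (k : ℕ) : cumulant (Measure.dirac 0) k = 0 := by
  simpa using cumulant_conv (memLp_id_dirac 0 k) (memLp_id_dirac 0 k)

end Cumulants

section ConvPow

variable {ν : Measure ℝ}

lemma convPow_succ (ν : Measure ℝ) (n : ℕ) : convPow ν (n + 1) = convPow ν n ∗ ν := rfl

instance isProbabilityMeasure_convPow [IsProbabilityMeasure ν] (n : ℕ) :
    IsProbabilityMeasure (convPow ν n) := by
  induction n with
  | zero => exact Measure.dirac.isProbabilityMeasure
  | succ n _ => rw [convPow_succ]; infer_instance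

lemma charFun_convPow [IsProbabilityMeasure ν] (n : ℕ) (t : ℝ) :
    charFun (convPow ν n) t = charFun ν t ^ n := by
  induction n with
  | zero => simp [convPow]
  | succ n ih => rw [convPow_succ, charFun_conv, ih, pow_succ]

lemma memLp_id_convPow [IsProbabilityMeasure ν] {p : ℕ} (h : MemLp id p ν) (n : ℕ) :
    MemLp id p (convPow ν n) := by
  induction n with
  | zero => exact memLp_id_dirac 0 p
  | succ n ih => exact memLp_id_conv ih h

lemma cumulant_convPow [IsProbabilityMeasure ν] {k : ℕ} (h : MemLp id k ν) (n : ℕ) :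
    cumulant (convPow ν n) k = n * cumulant ν k := by
  induction n with
  | zero => simp [convPow, cumulant_dirac_zero]
  | succ n ih =>
    rw [convPow_succ, cumulant_conv (memLp_id_convPow h n) h, ih]
    push_cast
    ring

lemma memLp_id_of_convPow [IsProbabilityMeasure ν] {p n : ℕ} (hp : p ≠ 0) (hn : n ≠ 0)
    (h : MemLp id p (convPow ν n)) : MemLp id p ν := by
  obtain ⟨n, rfl⟩ := Nat.exists_eq_succ_of_ne_zero hn
  exact memLp_id_right_of_conv hp h

end ConvPow

section Concentration

variable {X E : Type*} [PseudoMetricSpace X] [NormedAddCommGroup E] {g : X → E} {a : X} {C : ℝ}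

lemma exists_norm_sub_le_add_mul_dist_sq (hbound : ∀ x, ‖g x‖ ≤ C) (hcont : ContinuousAt g a)
    {η : ℝ} (hη : 0 < η) : ∃ D, ∀ x, ‖g x - g a‖ ≤ η + D * dist x a ^ 2 := by
  obtain ⟨δ, hδ, hclose⟩ := Metric.continuousAt_iff.1 hcont η hη
  have hC : 0 ≤ C := (norm_nonneg _).trans (hbound a)
  refine ⟨2 * C / δ ^ 2, fun x => ?_⟩
  rcases lt_or_ge (dist x a) δ with hnear | hfar
  · have hsmall : ‖g x - g a‖ < η := by simpa [dist_eq_norm] using hclose hnear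
    exact hsmall.le.trans (le_add_of_nonneg_right (by positivity))
  · calc ‖g x - g a‖ ≤ 2 * C := by
          linarith [norm_sub_le (g x) (g a), hbound x, hbound a]
      _ = 2 * C / δ ^ 2 * δ ^ 2 := by field_simp
      _ ≤ 2 * C / δ ^ 2 * dist x a ^ 2 := by gcongr
      _ ≤ η + 2 * C / δ ^ 2 * dist x a ^ 2 := le_add_of_nonneg_left hη.le

variable [MeasurableSpace X] [NormedSpace ℝ E] [CompleteSpace E]

lemma norm_integral_sub_smul_le {ρ : Measure X} [IsFiniteMeasure ρ] (hg : Integrable g ρ)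
    (hdist : Integrable (fun x => dist x a ^ 2) ρ) {η D : ℝ}
    (hle : ∀ x, ‖g x - g a‖ ≤ η + D * dist x a ^ 2) :
    ‖∫ x, g x ∂ρ - ρ.real Set.univ • g a‖ ≤
      η * ρ.real Set.univ + D * ∫ x, dist x a ^ 2 ∂ρ := by
  rw [← integral_const, ← integral_sub hg (integrable_const _)]
  refine (norm_integral_le_of_norm_le ((integrable_const η).add (hdist.const_mul D))
    (ae_of_all _ hle)).trans_eq ?_
  rw [integral_add' (integrable_const η) (hdist.const_mul D), integral_const, integral_const_mul,
    smul_eq_mul, mul_comm]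

lemma tendsto_integral_of_tendsto_integral_dist_sq {ι : Type*} {l : Filter ι} {ρ : ι → Measure X}
    {r : ℝ} (hfin : ∀ i, IsFiniteMeasure (ρ i)) (hg : StronglyMeasurable g)
    (hbound : ∀ x, ‖g x‖ ≤ C) (hcont : ContinuousAt g a)
    (hdist : ∀ i, Integrable (fun x => dist x a ^ 2) (ρ i))
    (hmass : Tendsto (fun i => (ρ i).real Set.univ) l (𝓝 r))
    (hvar : Tendsto (fun i => ∫ x, dist x a ^ 2 ∂ρ i) l (𝓝 0)) :
    Tendsto (fun i => ∫ x, g x ∂ρ i) l (𝓝 (r • g a)) := by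
  have hintegrable : ∀ i, Integrable g (ρ i) := fun i =>
    .of_bound hg.aestronglyMeasurable C (ae_of_all _ hbound)
  suffices hdiff : Tendsto (fun i => ∫ x, g x ∂ρ i - (ρ i).real Set.univ • g a) l (𝓝 0) by
    simpa using hdiff.add (hmass.smul_const (g a))
  refine Metric.tendsto_nhds.2 fun ε hε => ?_
  obtain ⟨η, hη, hηr⟩ : ∃ η > 0, η * r < ε := by
    refine ⟨ε / (|r| + 1), by positivity, ?_⟩
    rw [div_mul_eq_mul_div, div_lt_iff₀ (by positivity)]
    nlinarith [le_abs_self r]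
  obtain ⟨D, hD⟩ := exists_norm_sub_le_add_mul_dist_sq hbound hcont hη
  have hlim := (hmass.const_mul η).add (hvar.const_mul D)
  rw [mul_zero, add_zero] at hlim
  filter_upwards [hlim.eventually_lt_const hηr] with i hi
  rw [dist_zero_right]
  exact (norm_integral_sub_smul_le (hintegrable i) (hdist i) hD).trans_lt hi

end Concentration

section LevyKernel

open Complex

lemma norm_exp_mul_I_sub_one_sub_le (y : ℝ) : ‖cexp (y * I) - 1 - y * I‖ ≤ 3 * y ^ 2 := by
  have hnorm : ‖(y : ℂ) * I‖ = |y| := by simp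
  rcases le_total |y| 1 with hsmall | hlarge
  · calc ‖cexp (y * I) - 1 - y * I‖ ≤ ‖(y : ℂ) * I‖ ^ 2 :=
          norm_exp_sub_one_sub_id_le (hnorm.trans_le hsmall)
      _ ≤ 3 * y ^ 2 := by rw [hnorm, sq_abs]; linarith [sq_nonneg y]
  · calc ‖cexp (y * I) - 1 - y * I‖ ≤ ‖cexp (y * I)‖ + ‖(1 : ℂ)‖ + ‖(y : ℂ) * I‖ :=
          (norm_sub_le _ _).trans (by gcongr; exact norm_sub_le _ _)
      _ = 2 + |y| := by rw [norm_exp_ofReal_mul_I, norm_one, hnorm]; ring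
      _ ≤ 3 * y ^ 2 := by rw [← sq_abs]; nlinarith

/-- The integrand of Kolmogorov's canonical representation `exp (i t γ + ∫ levyKernel t x ρ(dx))` of
the characteristic function of an infinitely divisible law with finite variance. Its value at
`x = 0` is the junk value `0` rather than the continuous extension `-t ^ 2 / 2`; this is harmless
against the measures `kolmogorovMeasure`, which have no atom at `0`. -/
noncomputable def levyKernel (t x : ℝ) : ℂ :=
  (cexp (t * x * I) - 1 - t * x * I) / x ^ 2

lemma sq_mul_levyKernel (t x : ℝ) : x ^ 2 * levyKernel t x = cexp (t * x * I) - 1 - t * x * I := by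
  rcases eq_or_ne x 0 with rfl | hx
  · simp
  · exact mul_div_cancel₀ _ (pow_ne_zero 2 (ofReal_ne_zero.2 hx))

lemma norm_levyKernel_le (t x : ℝ) : ‖levyKernel t x‖ ≤ 3 * t ^ 2 := by
  have h := norm_exp_mul_I_sub_one_sub_le (t * x)
  rw [ofReal_mul, mul_pow, ← mul_assoc] at h
  rw [levyKernel, norm_div, norm_pow, norm_real, Real.norm_eq_abs, sq_abs]
  exact div_le_of_le_mul₀ (sq_nonneg x) (by positivity) h

lemma continuousAt_levyKernel (t : ℝ) {x : ℝ} (hx : x ≠ 0) : ContinuousAt (levyKernel t) x :=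
  ContinuousAt.div (by fun_prop) (by fun_prop) (pow_ne_zero 2 (ofReal_ne_zero.2 hx))

lemma measurable_levyKernel (t : ℝ) : Measurable (levyKernel t) := by
  unfold levyKernel
  fun_prop

end LevyKernel

section KolmogorovMeasure

variable {ν : Measure ℝ}

/-- The measure `n x² ν(dx)`; for large `n` it approximates the measure of Kolmogorov's canonical
representation of the `n`-fold convolution power of `ν`. -/
noncomputable def kolmogorovMeasure (ν : Measure ℝ) (n : ℕ) : Measure ℝ :=
  ν.withDensity fun x => ((n * ‖x‖₊ ^ 2 : NNReal) : ENNReal)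

lemma integrable_kolmogorovMeasure {E : Type*} [NormedAddCommGroup E] [NormedSpace ℝ E] {f : ℝ → E}
    (hf : Integrable (fun x => x ^ 2 • f x) ν) (n : ℕ) :
    Integrable f (kolmogorovMeasure ν n) := by
  rw [kolmogorovMeasure, integrable_withDensity_iff_integrable_smul (by fun_prop)]
  simpa [NNReal.smul_def, mul_smul] using hf.fun_smul (n : ℝ)

lemma integral_kolmogorovMeasure {E : Type*} [NormedAddCommGroup E] [NormedSpace ℝ E]
    (ν : Measure ℝ) (n : ℕ) (f : ℝ → E) :
    ∫ x, f x ∂kolmogorovMeasure ν n = (n : ℝ) • ∫ x, x ^ 2 • f x ∂ν := by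
  rw [kolmogorovMeasure, integral_withDensity_eq_integral_smul (by fun_prop), ← integral_smul]
  simp [NNReal.smul_def, mul_smul]

lemma isFiniteMeasure_kolmogorovMeasure [IsFiniteMeasure ν] (h : MemLp id 2 ν) (n : ℕ) :
    IsFiniteMeasure (kolmogorovMeasure ν n) := by
  have hsq : Integrable (fun x => x ^ 2 • (1 : ℝ)) ν := by
    simpa using integrable_pow_of_memLp_id h le_rfl
  rw [← integrable_const_iff_isFiniteMeasure (one_ne_zero (α := ℝ))]
  exact integrable_kolmogorovMeasure hsq n

lemma real_univ_kolmogorovMeasure (ν : Measure ℝ) (n : ℕ) :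
    (kolmogorovMeasure ν n).real Set.univ = n * ∫ x, x ^ 2 ∂ν := by
  simpa using integral_kolmogorovMeasure ν n fun _ => (1 : ℝ)

lemma sq_smul_dist_sq (x a : ℝ) :
    x ^ 2 • dist x a ^ 2 = x ^ 4 - 2 * a * x ^ 3 + a ^ 2 * x ^ 2 := by
  rw [Real.dist_eq, sq_abs, smul_eq_mul]
  ring

lemma integrable_dist_sq_kolmogorovMeasure [IsFiniteMeasure ν] (h : MemLp id 4 ν) (n : ℕ) (a : ℝ) :
    Integrable (fun x => dist x a ^ 2) (kolmogorovMeasure ν n) := by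
  have hpow : ∀ k ≤ 4, Integrable (fun x => x ^ k) ν := fun k => integrable_pow_of_memLp_id h
  refine integrable_kolmogorovMeasure ?_ n
  simp_rw [sq_smul_dist_sq]
  exact ((hpow 4 le_rfl).sub ((hpow 3 (by norm_num)).const_mul _)).add
    ((hpow 2 (by norm_num)).const_mul _)

lemma integral_dist_sq_kolmogorovMeasure [IsFiniteMeasure ν] (h : MemLp id 4 ν) (n : ℕ) (a : ℝ) :
    ∫ x, dist x a ^ 2 ∂kolmogorovMeasure ν n =
      n * (∫ x, x ^ 4 ∂ν) - 2 * a * (n * ∫ x, x ^ 3 ∂ν) + a ^ 2 * (n * ∫ x, x ^ 2 ∂ν) := by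
  have hpow : ∀ k ≤ 4, Integrable (fun x => x ^ k) ν := fun k => integrable_pow_of_memLp_id h
  have hcube := (hpow 3 (by norm_num)).const_mul (2 * a)
  have hsub : Integrable (fun x => x ^ 4 - 2 * a * x ^ 3) ν := (hpow 4 le_rfl).sub hcube
  simp_rw [integral_kolmogorovMeasure, sq_smul_dist_sq]
  rw [integral_add hsub ((hpow 2 (by norm_num)).const_mul _),
    integral_sub (hpow 4 le_rfl) hcube, integral_const_mul, integral_const_mul, smul_eq_mul]
  ring

lemma natCast_mul_charFun_sub_one [IsProbabilityMeasure ν] (h : MemLp id 1 ν) (n : ℕ) (t : ℝ) :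
    n * (charFun ν t - 1) = t * (n * ∫ x, x ∂ν : ℝ) * Complex.I +
      ∫ x, levyKernel t x ∂kolmogorovMeasure ν n := by
  have hid : Integrable (fun x : ℝ => t * x * Complex.I) ν :=
    ((memLp_one_iff_integrable.1 h).ofReal.const_mul _).mul_const _
  have hexp : Integrable (fun x : ℝ => Complex.exp (t * x * Complex.I)) ν :=
    .of_bound (by fun_prop) 1 (ae_of_all _ fun x => by
      simpa using (Complex.norm_exp_ofReal_mul_I (t * x)).le)
  have hsub : Integrable (fun x : ℝ => Complex.exp (t * x * Complex.I) - 1) ν :=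
    hexp.sub (integrable_const 1)
  have hkernel : ∫ x, x ^ 2 • levyKernel t x ∂ν =
      charFun ν t - 1 - t * (∫ x, x ∂ν : ℝ) * Complex.I := by
    simp_rw [Complex.real_smul, Complex.ofReal_pow, sq_mul_levyKernel]
    rw [integral_sub hsub hid, integral_sub hexp (integrable_const 1),
      ← charFun_apply_real, integral_mul_const, integral_const_mul, integral_complex_ofReal]
    simp
  rw [integral_kolmogorovMeasure, hkernel, Complex.real_smul]
  push_cast
  ring

end KolmogorovMeasure

section PoissonLimit

open ProbabilityTheory
open scoped NNReal

variable {ν : ℕ → Measure ℝ}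

lemma tendsto_integral_levyKernel_kolmogorovMeasure {r : ℝ} (hν : ∀ n, IsFiniteMeasure (ν n))
    (hmom : ∀ n, MemLp id 4 (ν n))
    (hlim : ∀ k ∈ Finset.Icc 2 4, Tendsto (fun n : ℕ => n * ∫ x, x ^ k ∂ν n) atTop (𝓝 r)) (t : ℝ) :
    Tendsto (fun n => ∫ x, levyKernel t x ∂kolmogorovMeasure (ν n) n) atTop
      (𝓝 (r • levyKernel t 1)) := by
  refine tendsto_integral_of_tendsto_integral_dist_sq
    (fun n => isFiniteMeasure_kolmogorovMeasure ((hmom n).mono_exponent (by norm_num)) n)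
    (measurable_levyKernel t).stronglyMeasurable (norm_levyKernel_le t)
    (continuousAt_levyKernel t one_ne_zero)
    (fun n => integrable_dist_sq_kolmogorovMeasure (hmom n) n 1) ?_ ?_
  · simpa only [real_univ_kolmogorovMeasure] using hlim 2 (by simp)
  · simp_rw [fun n => integral_dist_sq_kolmogorovMeasure (hmom n) n 1]
    have hvar := ((hlim 4 (by simp)).sub ((hlim 3 (by simp)).const_mul (2 * 1))).add
      ((hlim 2 (by simp)).const_mul (1 ^ 2))
    convert hvar using 2
    ring

lemma tendsto_charFun_pow_of_tendsto_mul_moment {r : ℝ} (hν : ∀ n, IsProbabilityMeasure (ν n))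
    (hmom : ∀ n, MemLp id 4 (ν n))
    (hlim : ∀ k ∈ Finset.Icc 1 4, Tendsto (fun n : ℕ => n * ∫ x, x ^ k ∂ν n) atTop (𝓝 r)) (t : ℝ) :
    Tendsto (fun n => charFun (ν n) t ^ n) atTop
      (𝓝 (Complex.exp (r * (Complex.exp (t * Complex.I) - 1)))) := by
  have hmean : Tendsto (fun n : ℕ => n * ∫ x, x ∂ν n) atTop (𝓝 r) := by
    simpa only [pow_one] using hlim 1 (by simp)
  have hkernel := tendsto_integral_levyKernel_kolmogorovMeasure (fun n => inferInstance) hmom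
    (fun k hk => hlim k (by grind)) t
  have hexponent : Tendsto (fun n : ℕ => n * (charFun (ν n) t - 1)) atTop
      (𝓝 (r * (Complex.exp (t * Complex.I) - 1))) := by
    simp_rw [fun n => natCast_mul_charFun_sub_one ((hmom n).mono_exponent (by norm_num)) n t]
    convert ((hmean.ofReal.const_mul (t : ℂ)).mul_const Complex.I).add hkernel using 2
    simp only [levyKernel, Complex.ofReal_one, mul_one, one_pow, div_one, Complex.real_smul]
    ring
  simpa using Complex.tendsto_one_add_pow_exp_of_tendsto hexponent

lemma weakConv_of_tendsto_charFun {μ : ℕ → Measure ℝ} {μ' : Measure ℝ}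
    (hμ : ∀ n, IsProbabilityMeasure (μ n)) [IsProbabilityMeasure μ']
    (h : ∀ t, Tendsto (fun n => charFun (μ n) t) atTop (𝓝 (charFun μ' t))) : WeakConv μ μ' := by
  let P : ℕ → ProbabilityMeasure ℝ := fun n => ⟨μ n, hμ n⟩
  let P' : ProbabilityMeasure ℝ := ⟨μ', inferInstance⟩
  have htendsto : Tendsto P atTop (𝓝 P') := ProbabilityMeasure.tendsto_of_tendsto_charFun h
  exact ProbabilityMeasure.tendsto_iff_forall_integral_tendsto.1 htendsto

lemma weakConv_convPow_poissonMeasure {r : ℝ≥0} (hν : ∀ n, IsProbabilityMeasure (ν n))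
    (hmom : ∀ n, MemLp id 4 (ν n))
    (hκ : ∀ k ∈ Finset.Icc 1 4,
      Tendsto (fun n => cumulant (convPow (ν n) n) k) atTop (𝓝 r)) :
    WeakConv (fun n => convPow (ν n) n) Po(ℝ, r) := by
  have hcumulant : ∀ k ∈ Finset.Icc 1 4,
      Tendsto (fun n : ℕ => n * cumulant (ν n) k) atTop (𝓝 (r : ℝ)) := fun k hk =>
    (hκ k hk).congr fun n => cumulant_convPow
      ((hmom n).mono_exponent (mod_cast (Finset.mem_Icc.1 hk).2)) n
  have hmoment : ∀ k ∈ Finset.Icc 1 4,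
      Tendsto (fun n : ℕ => n * ∫ x, x ^ k ∂ν n) atTop (𝓝 (r : ℝ)) :=
    tendsto_mul_of_tendsto_mul_cumulantSeq (m := fun n k => ∫ x, x ^ k ∂ν n)
      tendsto_natCast_atTop_atTop hcumulant
  refine weakConv_of_tendsto_charFun (fun n => inferInstance) fun t => ?_
  simp_rw [charFun_convPow, charFun_map_cast_poissonMeasure]
  exact tendsto_charFun_pow_of_tendsto_mul_moment hν hmom hmoment t

lemma poissonOne_eq_map_poissonMeasure : poissonOne = Po(ℝ, 1) := by
  rw [poissonOne, poissonMeasure, Measure.map_sum (by fun_prop)]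
  simp [Measure.map_smul]

theorem cumulants_to_one_implies_poisson_general {μ : ℕ → Measure ℝ} {r : ℝ≥0}
    (hdiv : ∀ n, 1 ≤ n → ∃ ν : Measure ℝ, IsProbabilityMeasure ν ∧ μ n = convPow ν n)
    (hmom : ∀ n, 1 ≤ n → MemLp id 4 (μ n))
    (hκ : ∀ k ∈ Finset.Icc 1 4, Tendsto (fun n => cumulant (μ n) k) atTop (𝓝 r)) :
    WeakConv μ Po(ℝ, r) := by
  have hroot : ∀ n, ∃ ν : Measure ℝ,
      IsProbabilityMeasure ν ∧ MemLp id 4 ν ∧ (1 ≤ n → μ n = convPow ν n) := fun n => by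
    rcases n.eq_zero_or_pos with rfl | hn
    · exact ⟨Measure.dirac 0, inferInstance, memLp_id_dirac 0 4, by simp⟩
    · obtain ⟨ν, hν, hμν⟩ := hdiv n hn
      exact ⟨ν, hν, memLp_id_of_convPow four_ne_zero hn.ne' (hμν ▸ hmom n hn), fun _ => hμν⟩
  choose ν hν hνmom hμν using hroot
  have heq : μ =ᶠ[atTop] fun n => convPow (ν n) n := eventually_atTop.2 ⟨1, hμν⟩
  have hweak : WeakConv (fun n => convPow (ν n) n) Po(ℝ, r) :=
    weakConv_convPow_poissonMeasure hν hνmom fun k hk =>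
      (hκ k hk).congr' (heq.fun_comp (cumulant · k))
  exact fun f => (hweak f).congr' (heq.symm.fun_comp fun ρ => ∫ x, f x ∂ρ)

end PoissonLimit

theorem cumulants_to_one_implies_poisson
    (μ : ℕ → Measure ℝ)
    (hprob : ∀ n, IsProbabilityMeasure (μ n))
    (hID : ∀ n, IsClassicallyInfDiv (μ n))
    (hmom4 : ∀ n, Integrable (fun x => x ^ 4) (μ n))
    (hκ1 : Tendsto (fun n => ∫ x, x ∂(μ n)) atTop (𝓝 1))
    (hκ2 : Tendsto (fun n =>
      (∫ x, x ^ 2 ∂(μ n)) - (∫ x, x ∂(μ n)) ^ 2) atTop (𝓝 1))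
    (hκ3 : Tendsto (fun n =>
      (∫ x, x ^ 3 ∂(μ n)) - 3 * (∫ x, x ∂(μ n)) * (∫ x, x ^ 2 ∂(μ n))
        + 2 * (∫ x, x ∂(μ n)) ^ 3) atTop (𝓝 1))
    (hκ4 : Tendsto (fun n =>
      (∫ x, x ^ 4 ∂(μ n)) - 4 * (∫ x, x ∂(μ n)) * (∫ x, x ^ 3 ∂(μ n))
        - 3 * (∫ x, x ^ 2 ∂(μ n)) ^ 2
        + 12 * (∫ x, x ∂(μ n)) ^ 2 * (∫ x, x ^ 2 ∂(μ n))
        - 6 * (∫ x, x ∂(μ n)) ^ 4) atTop (𝓝 1)) :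
    WeakConv μ poissonOne := by
  rw [poissonOne_eq_map_poissonMeasure]
  refine cumulants_to_one_implies_poisson_general (fun n => hID n n)
    (fun n _ => (memLp_id_iff_integrable_pow four_ne_zero).2 (hmom4 n)) fun k hk => ?_
  rw [NNReal.coe_one]
  obtain ⟨hk₁, hk₄⟩ := Finset.mem_Icc.1 hk
  interval_cases k
  · simpa only [cumulant_one] using hκ1
  · simpa only [cumulant_two] using hκ2
  · simpa only [cumulant_three] using hκ3
  · simpa only [cumulant_four] using hκ4
end

section
/- Let μ₁ and μ₂ be Borel probability measures on ℝ whose Cauchy transforms agree on the closed horizontal half-plane {z ∈ ℂ : Im(z) ≥ 1}, i.e., ∫_ℝ 1/(z − x) dμ₁(x) = ∫_ℝ 1/(z − x) dμ₂(x) for every z ∈ ℂ with Im(z) ≥ 1. Then μ₁ = μ₂. -/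
open MeasureTheory

/-- The Cauchy transform of a Borel measure ν on ℝ: G_ν(z) = ∫ (z - x)⁻¹ dν(x). -/
noncomputable def cauchyTransform (ν : Measure ℝ) (z : ℂ) : ℂ :=
  ∫ x, (z - (x : ℂ))⁻¹ ∂ν

/-!
The Cauchy transform is holomorphic, so agreement near one point of the upper half-plane spreads to
all of it. Up to constants, its derivatives are the integrals of the powers `(z - x)⁻ⁿ`, so these
agree as well for `n ≥ 1`. For `z = n / (i t)` one has `zⁿ (z - x)⁻ⁿ = (1 - i t x / n)⁻ⁿ`, which is
bounded by `1` and tends to `exp (i t x)`. Hence the characteristic functions agree at every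
`t < 0`, and by conjugation and continuity everywhere.
-/

open Complex Filter Set Topology

lemma hasDerivAt_inv_sub_pow {𝕜 : Type*} [NontriviallyNormedField 𝕜] {z a : 𝕜} (h : z - a ≠ 0)
    (n : ℕ) :
    HasDerivAt (fun w ↦ (w - a)⁻¹ ^ n) (-n * (z - a)⁻¹ ^ (n + 1)) z := by
  refine ((((hasDerivAt_id z).sub_const a).fun_inv h).fun_pow n).congr_deriv ?_
  rcases n with _ | n
  · simp
  · simp only [id_eq, Nat.add_sub_cancel, neg_div, one_div, ← inv_pow]
    ring

lemma tendsto_div_mul_inv_sub_pow_exp {s : ℂ} (hs : s ≠ 0) (x : ℂ) :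
    Tendsto (fun n : ℕ ↦ (n / s * (n / s - x)⁻¹) ^ n) atTop (𝓝 (exp (s * x))) := by
  have hexp : Tendsto (fun n : ℕ ↦ ((1 + -(s * x) / n) ^ n)⁻¹) atTop (𝓝 (exp (s * x))) := by
    simpa only [exp_neg, inv_inv] using
      (tendsto_one_add_div_pow_exp (-(s * x))).inv₀ (exp_ne_zero _)
  refine hexp.congr' ?_
  filter_upwards [eventually_ne_atTop 0] with n hn
  have hn' : (n : ℂ) ≠ 0 := Nat.cast_ne_zero.2 hn
  have hsub : n / s - x = n / s * (1 + -(s * x) / n) := by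
    field_simp
    ring
  rw [hsub, mul_inv, mul_inv_cancel_left₀ (div_ne_zero hn' hs), inv_pow]

section Resolvent

variable {z : ℂ}

lemma sub_ofReal_ne_zero (hz : z.im ≠ 0) (x : ℝ) : z - x ≠ 0 :=
  fun h ↦ hz (by simpa using congrArg im h)

lemma norm_inv_sub_ofReal_le (hz : z.im ≠ 0) (x : ℝ) : ‖(z - x)⁻¹‖ ≤ |z.im|⁻¹ := by
  rw [norm_inv]
  refine inv_anti₀ (abs_pos.2 hz) ?_
  simpa using abs_im_le_norm (z - x)

lemma norm_mul_inv_sub_ofReal_le_one (hre : z.re = 0) (x : ℝ) : ‖z * (z - x)⁻¹‖ ≤ 1 := by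
  rcases eq_or_ne z.im 0 with him | him
  · simp [show z = 0 from Complex.ext hre him]
  · calc ‖z * (z - x)⁻¹‖ ≤ |z.im| * |z.im|⁻¹ := by
          rw [norm_mul, ← abs_im_eq_norm.2 hre]
          gcongr
          exact norm_inv_sub_ofReal_le him x
      _ = 1 := mul_inv_cancel₀ (abs_ne_zero.2 him)

end Resolvent

/-- The integral of the `n`-th power of the resolvent kernel, `∫ (z - x)⁻ⁿ dν(x)`. The Cauchy
transform is the case `n = 1`; the higher ones are, up to constants, its derivatives in `z`. -/
noncomputable def resolventMoment (ν : Measure ℝ) (n : ℕ) (z : ℂ) : ℂ :=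
  ∫ x : ℝ, (z - x)⁻¹ ^ n ∂ν

lemma resolventMoment_one (ν : Measure ℝ) : resolventMoment ν 1 = cauchyTransform ν := by
  ext z
  simp only [resolventMoment, cauchyTransform, pow_one]

section FiniteMeasure

variable {ν μ₁ μ₂ : Measure ℝ} [IsFiniteMeasure ν] [IsFiniteMeasure μ₁] [IsFiniteMeasure μ₂]

lemma integrable_inv_sub_pow {z : ℂ} (hz : z.im ≠ 0) (n : ℕ) :
    Integrable (fun x : ℝ ↦ (z - x)⁻¹ ^ n) ν := by
  refine .of_bound (by fun_prop) (|z.im|⁻¹ ^ n) (ae_of_all _ fun x ↦ ?_)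
  rw [norm_pow]
  gcongr
  exact norm_inv_sub_ofReal_le hz x

lemma hasDerivAt_resolventMoment {z : ℂ} (hz : z.im ≠ 0) (n : ℕ) :
    HasDerivAt (resolventMoment ν n) (-n * resolventMoment ν (n + 1) z) z := by
  obtain ⟨δ, hδ, hδz⟩ := exists_between (abs_pos.2 hz)
  have hs : {w : ℂ | δ < |w.im|} ∈ 𝓝 z :=
    (isOpen_lt continuous_const continuous_im.abs).mem_nhds hδz
  have him {w : ℂ} (hw : δ < |w.im|) : w.im ≠ 0 := abs_pos.1 (hδ.trans hw)
  have hbound (x : ℝ) (w : ℂ) (hw : δ < |w.im|) :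
      ‖-n * (w - x)⁻¹ ^ (n + 1)‖ ≤ n * δ⁻¹ ^ (n + 1) := by
    rw [norm_mul, norm_neg, norm_natCast, norm_pow]
    gcongr
    exact (norm_inv_sub_ofReal_le (him hw) x).trans (inv_anti₀ hδ hw.le)
  have hderiv := (hasDerivAt_integral_of_dominated_loc_of_deriv_le hs
    (Eventually.of_forall fun w ↦ by fun_prop) (integrable_inv_sub_pow (ν := ν) hz n)
    (by fun_prop) (ae_of_all _ hbound) (integrable_const _)
    (ae_of_all _ fun x w hw ↦ hasDerivAt_inv_sub_pow (sub_ofReal_ne_zero (him hw) x) n)).2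
  rwa [integral_const_mul] at hderiv

lemma differentiableAt_cauchyTransform {z : ℂ} (hz : z.im ≠ 0) :
    DifferentiableAt ℂ (cauchyTransform ν) z :=
  resolventMoment_one ν ▸ (hasDerivAt_resolventMoment hz 1).differentiableAt

lemma eqOn_resolventMoment_of_eqOn_cauchyTransform {U : Set ℂ} (hU : IsOpen U)
    (him : ∀ z ∈ U, z.im ≠ 0) (h : EqOn (cauchyTransform μ₁) (cauchyTransform μ₂) U)
    {n : ℕ} (hn : 1 ≤ n) : EqOn (resolventMoment μ₁ n) (resolventMoment μ₂ n) U := by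
  induction n, hn using Nat.le_induction with
  | base => simpa only [resolventMoment_one] using h
  | succ n hn ih =>
    intro z hz
    have hderiv := ih.deriv hU hz
    rw [(hasDerivAt_resolventMoment (him z hz) n).deriv,
      (hasDerivAt_resolventMoment (him z hz) n).deriv] at hderiv
    exact mul_left_cancel₀ (neg_ne_zero.2 (Nat.cast_ne_zero.2 (by lia))) hderiv

lemma tendsto_pow_mul_resolventMoment_charFun {t : ℝ} (ht : t ≠ 0) :
    Tendsto (fun n : ℕ ↦ (n / (t * I)) ^ n * resolventMoment ν n (n / (t * I))) atTop
      (𝓝 (charFun ν t)) := by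
  simp_rw [resolventMoment, ← integral_const_mul, ← mul_pow, charFun_apply_real,
    mul_right_comm (t : ℂ) _ I]
  refine tendsto_integral_of_dominated_convergence 1 (fun n ↦ by fun_prop) (integrable_const _)
    (fun n ↦ ae_of_all _ fun x ↦ ?_) (ae_of_all _ fun x ↦ tendsto_div_mul_inv_sub_pow_exp
      (mul_ne_zero (ofReal_ne_zero.2 ht) I_ne_zero) x)
  have hre : ((n : ℂ) / (t * I)).re = 0 := by simp [div_re]
  rw [norm_pow]
  exact pow_le_one₀ (norm_nonneg _) (norm_mul_inv_sub_ofReal_le_one hre x)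

lemma charFun_eq_of_eqOn_cauchyTransform_of_neg
    (h : EqOn (cauchyTransform μ₁) (cauchyTransform μ₂) {z | 0 < z.im}) {t : ℝ} (ht : t < 0) :
    charFun μ₁ t = charFun μ₂ t := by
  refine tendsto_nhds_unique_of_eventuallyEq (tendsto_pow_mul_resolventMoment_charFun ht.ne)
    (tendsto_pow_mul_resolventMoment_charFun ht.ne) ?_
  filter_upwards [eventually_ge_atTop 1] with n hn
  have him : 0 < ((n : ℂ) / (t * I)).im := by
    have hn' : (0 : ℝ) < n := Nat.cast_pos.2 hn
    have heq : (n : ℂ) / (t * I) = (-(n / t) : ℝ) * I := by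
      rw [← div_div, div_I]
      push_cast
      ring
    rw [heq, im_ofReal_mul, I_im, mul_one]
    exact neg_pos.2 (div_neg_of_pos_of_neg hn' ht)
  rw [eqOn_resolventMoment_of_eqOn_cauchyTransform
    (isOpen_lt continuous_const continuous_im) (fun _ hz ↦ ne_of_gt hz) h hn him]

lemma measure_eq_of_charFun_eq_of_neg (h : ∀ t < 0, charFun μ₁ t = charFun μ₂ t) : μ₁ = μ₂ := by
  refine Measure.ext_of_charFun (continuous_charFun.ext_on (dense_compl_singleton (0 : ℝ))
    continuous_charFun fun t ht ↦ ?_)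
  rcases lt_or_gt_of_ne ht with hneg | hpos
  · exact h t hneg
  · rw [← neg_neg t, charFun_neg, h (-t) (neg_neg_of_pos hpos), ← charFun_neg]

lemma eqOn_cauchyTransform_of_frequently_eq {z₀ : ℂ} (hz₀ : 0 < z₀.im)
    (h : ∃ᶠ z in 𝓝[≠] z₀, cauchyTransform μ₁ z = cauchyTransform μ₂ z) :
    EqOn (cauchyTransform μ₁) (cauchyTransform μ₂) {z | 0 < z.im} := by
  have hanalytic (ν : Measure ℝ) [IsFiniteMeasure ν] :
      AnalyticOnNhd ℂ (cauchyTransform ν) {z | 0 < z.im} :=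
    DifferentiableOn.analyticOnNhd
      (fun z hz ↦ (differentiableAt_cauchyTransform (ne_of_gt hz)).differentiableWithinAt)
      (isOpen_lt continuous_const continuous_im)
  exact (hanalytic μ₁).eqOn_of_preconnected_of_frequently_eq (hanalytic μ₂)
    (convex_halfSpace_im_gt 0).isPreconnected hz₀ h

theorem cauchyTransform_injective_general {z₀ : ℂ} (hz₀ : 0 < z₀.im)
    (h : ∃ᶠ z in 𝓝[≠] z₀, cauchyTransform μ₁ z = cauchyTransform μ₂ z) : μ₁ = μ₂ :=
  measure_eq_of_charFun_eq_of_neg fun _ ht ↦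
    charFun_eq_of_eqOn_cauchyTransform_of_neg (eqOn_cauchyTransform_of_frequently_eq hz₀ h) ht

end FiniteMeasure

theorem cauchyTransform_injective
    (μ₁ μ₂ : Measure ℝ)
    (hprob₁ : IsProbabilityMeasure μ₁) (hprob₂ : IsProbabilityMeasure μ₂)
    (h : ∀ z : ℂ, 1 ≤ z.im → cauchyTransform μ₁ z = cauchyTransform μ₂ z) :
    μ₁ = μ₂ := by
  have hnear : ∀ᶠ z : ℂ in 𝓝 (2 * I), 1 < z.im :=
    continuous_im.continuousAt.eventually_const_lt (by simp)
  exact cauchyTransform_injective_general (z₀ := 2 * I) (by simp)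
    ((hnear.filter_mono nhdsWithin_le_nhds).mono fun z hz ↦ h z hz.le).frequently
end
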